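/- Let d be a squarefree positive integer and K = ℚ(√−d) the imaginary quadratic field inside ℂ, with trace form q(x,y) = Tr_{K/ℚ}(x·ȳ), viewed as a quadratic space over ℚ of dimension 2. Let V be the 22-dimensional quadratic space over ℚ given by ℚ²² with the bilinear form whose Gram matrix is block diagonal with two blocks equal to the negative of the Cartan matrix of E8, two blocks [[0,1],[1,0]], and one block [[−2,1],[1,−2]]. Then there exists a quadratic space V₁ over ℚ (of dimension 20) such that the orthogonal direct sum (K, q) ⊕ V₁ is isometric to V as quadratic spaces over ℚ. -/

import Mathlib

open Matrix

/-- The Gram matrix (over `ℚ`) of the 22-dimensional quadratic space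
`E8(-1) ⊕ E8(-1) ⊕ U ⊕ U ⊕ A2(-1)`: block diagonal with two blocks equal to the
negative of the Cartan matrix of `E₈` (indices `0..7` and `8..15`), two hyperbolic
blocks `[[0,1],[1,0]]` (indices `16,17` and `18,19`), and one block `[[-2,1],[1,-2]]`
(indices `20,21`). -/
def gramVQ : Matrix (Fin 22) (Fin 22) ℚ := fun i j =>
  if h : (i : ℕ) < 8 ∧ (j : ℕ) < 8 then
    - (CartanMatrix.E₈ ⟨(i : ℕ), h.1⟩ ⟨(j : ℕ), h.2⟩ : ℚ)
  else if h : 8 ≤ (i : ℕ) ∧ (i : ℕ) < 16 ∧ 8 ≤ (j : ℕ) ∧ (j : ℕ) < 16 then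
    - (CartanMatrix.E₈ ⟨(i : ℕ) - 8, by omega⟩ ⟨(j : ℕ) - 8, by omega⟩ : ℚ)
  else if ((i : ℕ) = 16 ∧ (j : ℕ) = 17) ∨ ((i : ℕ) = 17 ∧ (j : ℕ) = 16) ∨
          ((i : ℕ) = 18 ∧ (j : ℕ) = 19) ∨ ((i : ℕ) = 19 ∧ (j : ℕ) = 18) then 1
  else if ((i : ℕ) = 20 ∧ (j : ℕ) = 20) ∨ ((i : ℕ) = 21 ∧ (j : ℕ) = 21) then -2
  else if ((i : ℕ) = 20 ∧ (j : ℕ) = 21) ∨ ((i : ℕ) = 21 ∧ (j : ℕ) = 20) then 1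
  else 0

/-!
Every symmetric form `q` on a space `W`, in characteristic different from 2, is induced from the
hyperbolic space `W* ⊕ W` along `w ↦ (q(w, ·) / 2, w)`. If `W` has dimension 2, then this
hyperbolic space is a sum of two hyperbolic planes, hence a subspace of `V`. A subspace on which
the form is nondegenerate is complementary to its orthogonal complement, so every nondegenerate
symmetric form of rank 2 splits off `V`. The trace form of a quadratic field is of this kind.
-/

open Module
open LinearMap (BilinForm)

section OrthogonalSum

variable {R M N N' : Type*} [CommSemiring R] [AddCommMonoid M] [Module R M]
  [AddCommMonoid N] [Module R N] [AddCommMonoid N'] [Module R N']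

/-- The orthogonal direct sum of two bilinear forms, on the product of the underlying modules. -/
def orthogonalSum (B : BilinForm R M) (C : BilinForm R N) : BilinForm R (M × N) :=
  B.comp (.fst R M N) (.fst R M N) + C.comp (.snd R M N) (.snd R M N)

theorem orthogonalSum_apply (B : BilinForm R M) (C : BilinForm R N) (x y : M × N) :
    orthogonalSum B C x y = B x.1 y.1 + C x.2 y.2 :=
  rfl

theorem orthogonalSum_equivalent_of_right (B : BilinForm R M) {C : BilinForm R N}
    {C' : BilinForm R N'} (h : C.Equivalent C') :
    (orthogonalSum B C).Equivalent (orthogonalSum B C') := by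
  obtain ⟨e⟩ := h
  exact ⟨{ (LinearEquiv.refl R M).prodCongr e.toLinearEquiv with
    map_app' := fun x y ↦ by simp [orthogonalSum_apply] }⟩

end OrthogonalSum

section Splitting

variable {k V W : Type*} [Field k] [AddCommGroup V] [Module k V] [AddCommGroup W] [Module k W]
  {B : BilinForm k V} {q : BilinForm k W}

theorem isometry_injective_of_nondegenerate (hq : q.Nondegenerate) (f : q →bᵢ B) :
    Function.Injective f.toLinearMap := by
  refine LinearMap.ker_eq_bot.1 (LinearMap.ker_eq_bot'.2 fun x hx ↦ hq.1 x fun y ↦ ?_)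
  rw [← f.map_app, ← f.coe_toLinearMap, hx, map_zero, LinearMap.zero_apply]

theorem restrict_range_isometry_nondegenerate (hq : q.Nondegenerate) (f : q →bᵢ B) :
    (B.restrict f.toLinearMap.range).Nondegenerate := by
  let e := LinearEquiv.ofInjective f.toLinearMap (isometry_injective_of_nondegenerate hq f)
  rw [← LinearMap.BilinForm.nondegenerate_congr_iff e.symm]
  convert hq
  ext x y
  exact f.map_app x y

variable [FiniteDimensional k V]

theorem isCompl_range_isometry_orthogonal (hB : B.IsRefl) (hq : q.Nondegenerate) (f : q →bᵢ B) :
    IsCompl f.toLinearMap.range (B.orthogonal f.toLinearMap.range) :=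
  LinearMap.BilinForm.isCompl_orthogonal_of_restrict_nondegenerate hB
    (restrict_range_isometry_nondegenerate hq f)

theorem orthogonalSum_orthogonal_range_isometry_equivalent (hB : B.IsSymm)
    (hq : q.Nondegenerate) (f : q →bᵢ B) :
    (orthogonalSum q (B.restrict (B.orthogonal f.toLinearMap.range))).Equivalent B := by
  let e := ((LinearEquiv.ofInjective _ (isometry_injective_of_nondegenerate hq f)).prodCongr
    (.refl k _)).trans
      (Submodule.prodEquivOfIsCompl _ _ (isCompl_range_isometry_orthogonal hB.isRefl hq f))
  refine ⟨{ e with map_app' := ?_ }⟩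
  rintro ⟨x, v⟩ ⟨y, w⟩
  have hxw : B (f x) w = 0 := w.2 (f x) ⟨x, rfl⟩
  have hvy : B v (f y) = 0 := (hB.eq _ _).trans (v.2 (f y) ⟨y, rfl⟩)
  simp [e, orthogonalSum_apply, hxw, hvy]

theorem finrank_add_finrank_orthogonal_range_isometry (hB : B.IsRefl) (hq : q.Nondegenerate)
    (f : q →bᵢ B) :
    finrank k W + finrank k (B.orthogonal f.toLinearMap.range) = finrank k V := by
  rw [← LinearMap.finrank_range_of_inj (isometry_injective_of_nondegenerate hq f)]
  exact Submodule.finrank_add_eq_of_isCompl (isCompl_range_isometry_orthogonal hB hq f)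

theorem exists_orthogonalSum_equivalent_of_isometry (hB : B.IsSymm) (hq : q.Nondegenerate)
    (f : q →bᵢ B) {n : ℕ} (hn : finrank k W + n = finrank k V) :
    ∃ C : BilinForm k (Fin n → k), C.IsSymm ∧ (orthogonalSum q C).Equivalent B := by
  have hrank : finrank k (Fin n → k) = finrank k (B.orthogonal f.toLinearMap.range) := by
    have := finrank_add_finrank_orthogonal_range_isometry hB.isRefl hq f
    rw [finrank_fin_fun]
    omega
  let g := LinearEquiv.ofFinrankEq _ _ hrank
  let C := (B.restrict _).comp g.toLinearMap g.toLinearMap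
  have hC : (B.restrict _).Equivalent C := ⟨(B.restrict _).isometryEquivOfCompLinearEquiv g⟩
  exact ⟨C, ⟨fun v w ↦ hB.eq _ _⟩, (orthogonalSum_equivalent_of_right q hC.symm).trans
    (orthogonalSum_orthogonal_range_isometry_equivalent hB hq f)⟩

end Splitting

section Hyperbolic

variable {R M W ι : Type*} [CommRing R] [AddCommGroup M] [Module R M] [AddCommGroup W] [Module R W]
  [DecidableEq ι]

/-- The isometry `w ↦ (q(w, ·) / 2, w)` of a symmetric bilinear form `q` on `W` into the hyperbolic
space `W* ⊕ W`. -/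
def isometryDualProd [Invertible (2 : R)] {q : BilinForm R W} (hq : q.IsSymm) :
    q →bᵢ LinearMap.dualProd R W where
  toLinearMap := (⅟(2 : R) • q).prod .id
  map_app' x y := by simp [hq.eq y x, ← two_mul]

/-- Vectors `u i`, `v i` spanning pairwise orthogonal hyperbolic planes: each pair `(u i, v i)`
has Gram matrix `[[0, 1], [1, 0]]`. -/
structure IsHyperbolicFamily (B : BilinForm R M) (u v : ι → M) : Prop where
  apply_left_left : ∀ i j, B (u i) (u j) = 0
  apply_right_right : ∀ i j, B (v i) (v j) = 0
  apply_left_right : ∀ i j, B (u i) (v j) = if i = j then 1 else 0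
  apply_right_left : ∀ i j, B (v i) (u j) = if i = j then 1 else 0

/-- The isometry of the hyperbolic space `W* ⊕ W` into `M` sending a basis of `W` and its dual basis
to a hyperbolic family of `M`. -/
noncomputable def IsHyperbolicFamily.dualProdIsometry [Finite ι] {B : BilinForm R M} {u v : ι → M}
    (h : IsHyperbolicFamily B u v) (b : Basis ι R W) : LinearMap.dualProd R W →bᵢ B where
  toLinearMap := (b.dualBasis.constr R v).coprod (b.constr R u)
  map_app' := by
    set f := (b.dualBasis.constr R v).coprod (b.constr R u)
    have hv (i) : f (b.coord i, 0) = v i := by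
      simpa [f] using b.dualBasis.constr_basis R v i
    have hu (i) : f (0, b i) = u i := by simp [f]
    suffices B.comp f f = LinearMap.dualProd R W from LinearMap.congr_fun₂ this
    refine LinearMap.BilinForm.ext_basis (b.dualBasis.prod b) ?_
    rintro (i | i) (j | j)
    · simp [hv, h.apply_right_right]
    · simp [hv, hu, h.apply_right_left, Finsupp.single_apply, eq_comm]
    · simp [hv, hu, h.apply_left_right, Finsupp.single_apply]
    · simp [hu, h.apply_left_left]

end Hyperbolic

section TwistedTraceForm

/-- The trace form `(x, y) ↦ Tr (x * σ y)` twisted by an automorphism `σ`. For `σ` the complex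
conjugation of an imaginary quadratic field it is the form `q` of the theorem. -/
noncomputable def twistedTraceForm {R S : Type*} [CommRing R] [CommRing S] [Algebra R S]
    (σ : S ≃ₐ[R] S) : BilinForm R S :=
  (Algebra.traceForm R S).compRight σ.toLinearMap

theorem twistedTraceForm_isSymm {R S : Type*} [CommRing R] [CommRing S] [Algebra R S]
    {σ : S ≃ₐ[R] S} (hσ : Function.Involutive σ) : (twistedTraceForm σ).IsSymm where
  eq x y := calc
    Algebra.trace R S (x * σ y) = Algebra.trace R S (σ (x * σ y)) :=
      (Algebra.trace_eq_of_algEquiv σ _).symm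
    _ = Algebra.trace R S (y * σ x) := by rw [map_mul, hσ, mul_comm]

variable {F L : Type*} [Field F] [Field L] [Algebra F L]

theorem twistedTraceForm_nondegenerate [FiniteDimensional F L] [Algebra.IsSeparable F L]
    (σ : L ≃ₐ[F] L) : (twistedTraceForm σ).Nondegenerate := by
  have h := traceForm_nondegenerate F L
  refine ⟨fun x hx ↦ h.1 x fun y ↦ ?_, fun y hy ↦ ?_⟩
  · simpa [twistedTraceForm] using hx (σ.symm y)
  · simpa using h.2 (σ y) hy

theorem algEquiv_involutive_of_isQuadraticExtension [Algebra.IsQuadraticExtension F L]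
    (σ : L ≃ₐ[F] L) : Function.Involutive σ := by
  have hcard : Nat.card (L ≃ₐ[F] L) ≤ 2 := by
    rw [← Algebra.IsQuadraticExtension.finrank_eq_two F L, Nat.card_eq_fintype_card]
    exact AlgEquiv.card_le
  have hdvd : orderOf σ ∣ 2 := by
    refine (orderOf_dvd_natCard σ).trans ?_
    have := Nat.card_pos (α := L ≃ₐ[F] L)
    interval_cases Nat.card (L ≃ₐ[F] L) <;> norm_num
  have hsq : σ ^ 2 = 1 := orderOf_dvd_iff_pow_eq_one.1 hdvd
  exact fun x ↦ by simpa [sq] using DFunLike.congr_fun hsq x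

end TwistedTraceForm

theorem gramVQ_isSymm : gramVQ.IsSymm := by
  unfold IsSymm
  decide +kernel

theorem gramVQ_isHyperbolicFamily :
    IsHyperbolicFamily gramVQ.toBilin' ![Pi.single 16 1, Pi.single 18 1]
      ![Pi.single 17 1, Pi.single 19 1] := by
  constructor <;> simp [Fin.forall_fin_two, gramVQ]

theorem traceForm_orthogonal_complement_in_V_general {W : Type*} [AddCommGroup W] [Module ℚ W]
    {q : BilinForm ℚ W} (hsymm : q.IsSymm) (hq : q.Nondegenerate) (hdim : finrank ℚ W = 2) :
    ∃ B₁ : BilinForm ℚ (Fin 20 → ℚ),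
      B₁.IsSymm ∧ (orthogonalSum q B₁).Equivalent gramVQ.toBilin' :=
  have : FiniteDimensional ℚ W := .of_finrank_pos (by omega)
  let f := (gramVQ_isHyperbolicFamily.dualProdIsometry (finBasisOfFinrankEq ℚ W hdim)).comp
    (isometryDualProd hsymm)
  exists_orthogonalSum_equivalent_of_isometry (isSymm_toBilin'_iff_isSymm.2 gramVQ_isSymm) hq f
    (by simp [hdim])

/-- **The trace form of an imaginary quadratic field splits off the quadratic space `V`.**
Let `d` be a squarefree positive integer, `K = ℚ(√-d)` (an abstract number field of
degree 2 over `ℚ` containing `ω` with `ω ^ 2 = -d`), `σ` the nontrivial Galois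
automorphism (complex conjugation, `σ ω = -ω`), and `q(x, y) = Tr_{K/ℚ}(x * σ y)` the
trace form, viewed as a 2-dimensional quadratic space over `ℚ`.  Let `V` be `ℚ²²` with
the bilinear form of Gram matrix `gramVQ`.  Then there exists a quadratic space `V₁`
over `ℚ` of dimension 20 (realized as `ℚ²⁰` with a symmetric bilinear form `B₁`) such
that the orthogonal direct sum `(K, q) ⊕ V₁` is isometric to `V` as quadratic spaces
over `ℚ`. -/
theorem traceForm_orthogonal_complement_in_V
    (d : ℕ) (hd : Squarefree d) (hd0 : 0 < d)
    (K : Type) [Field K] [NumberField K]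
    (hdeg : Module.finrank ℚ K = 2)
    (ω : K) (hω : ω ^ 2 = -(d : K))
    (σ : K ≃ₐ[ℚ] K) (hσ : σ ω = -ω) :
    ∃ B₁ : (Fin 20 → ℚ) →ₗ[ℚ] (Fin 20 → ℚ) →ₗ[ℚ] ℚ,
      (∀ v w : Fin 20 → ℚ, B₁ v w = B₁ w v) ∧
      ∃ e : (K × (Fin 20 → ℚ)) ≃ₗ[ℚ] (Fin 22 → ℚ),
        ∀ (x₁ x₂ : K) (v₁ v₂ : Fin 20 → ℚ),
          e (x₁, v₁) ⬝ᵥ gramVQ.mulVec (e (x₂, v₂)) =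
            Algebra.trace ℚ K (x₁ * σ x₂) + B₁ v₁ v₂ := by
  have : Algebra.IsQuadraticExtension ℚ K := ⟨hdeg⟩
  obtain ⟨B₁, hB₁, ⟨e⟩⟩ := traceForm_orthogonal_complement_in_V_general
    (twistedTraceForm_isSymm (algEquiv_involutive_of_isQuadraticExtension σ))
    (twistedTraceForm_nondegenerate σ) hdeg
  refine ⟨B₁, hB₁.eq, e.toLinearEquiv, fun x₁ x₂ v₁ v₂ ↦ ?_⟩
  exact (toBilin'_apply' ..).symm.trans (e.map_app (x₂, v₂) (x₁, v₁))
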